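/- arXiv:2210.06882 — 4 statements merged into one kernel-verified Lean document; each statement's English description precedes it below -/
import Mathlib

section
/- (Upper bound of Corollary 1.4.) There exists an absolute constant C such that for every integer n ≥ 2, every hypergraph H = (V, (e_i)_{i ∈ I}) whose hyperedges are all nonempty and whose combinatorial size satisfies |V| + |I| ≤ n admits a hypergraph bipartite decomposition with at most C · (log₂ n)² colors; that is, the index set I can be partitioned into at most C · (log₂ n)² classes F_1, …, F_k such that for each class F_m there exists a subset U_m ⊆ V with |U_m ∩ e_i| = 1 for every i ∈ F_m. -/
/-- A hypergraph given by a vertex set `Vset`, an index set `I` and a hyperedge map `e`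
admits a *hypergraph bipartite decomposition* with (at most) `k` colors:
the index set can be partitioned into classes `F_1, …, F_k` (the fibers of `color`)
such that for each class there is a set `U ⊆ Vset` meeting every hyperedge of the
class in exactly one vertex. -/
def HasHBD {α β : Type} [DecidableEq α] (Vset : Finset α) (I : Finset β)
    (e : β → Finset α) (k : ℕ) : Prop :=
  ∃ color : β → Fin k, ∀ m : Fin k, ∃ U ⊆ Vset,
    ∀ i ∈ I, color i = m → (U ∩ e i).card = 1

open Finset in
lemma hbd_prob {α : Type} [DecidableEq α] (V e : Finset α) (he : e ⊆ V) (p q : ℝ)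
    (hp : 0 ≤ p) (hq : 0 ≤ q) (hpq : p + q = 1) :
    (e.card : ℝ) * (p * q ^ (e.card - 1)) ≤
      ∑ U ∈ V.powerset, p ^ U.card * q ^ (V.card - U.card) *
        (if (U ∩ e).card = 1 then (1 : ℝ) else 0) := by
  have key : ∀ x ∈ e ×ˢ (V \ e).powerset, (insert x.1 x.2) ∩ e = {x.1} := by
    rintro ⟨v, T⟩ hx
    simp only [mem_product, mem_powerset] at hx
    ext a
    simp only [mem_inter, mem_insert, mem_singleton]
    constructor
    · rintro ⟨h | h, h'⟩
      · exact h
      · exact absurd h' (mem_sdiff.1 (hx.2 h)).2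
    · rintro rfl; exact ⟨Or.inl rfl, hx.1⟩
  have hnot : ∀ x ∈ e ×ˢ (V \ e).powerset, x.1 ∉ x.2 := by
    rintro ⟨v, T⟩ hx h
    simp only [mem_product, mem_powerset] at hx
    exact (mem_sdiff.1 (hx.2 h)).2 hx.1
  have hinj : Set.InjOn (fun x : α × Finset α => insert x.1 x.2)
      (e ×ˢ (V \ e).powerset : Finset _) := by
    intro x hx y hy hxy
    have hx' := mem_coe.1 hx
    have hy' := mem_coe.1 hy
    have hxy' : insert x.1 x.2 = insert y.1 y.2 := hxy
    have h1 : x.1 = y.1 := by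
      have := key x hx'
      rw [hxy', key y hy'] at this
      exact (singleton_injective this).symm
    have h2 : x.2 = y.2 := by
      rw [← erase_insert (hnot x hx'), ← erase_insert (hnot y hy'), hxy', h1]
    exact Prod.ext h1 h2
  have hsub : (e ×ˢ (V \ e).powerset).image (fun x : α × Finset α => insert x.1 x.2)
      ⊆ V.powerset := by
    intro U hU
    obtain ⟨x, hx, rfl⟩ := mem_image.1 hU
    simp only [mem_product, mem_powerset] at hx
    rw [mem_powerset]
    exact insert_subset (he hx.1) (hx.2.trans sdiff_subset)
  refine le_trans (le_of_eq ?_) (sum_le_sum_of_subset_of_nonneg hsub ?_)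
  · rw [sum_image hinj, sum_product]
    have : ∀ v ∈ e, ∑ T ∈ (V \ e).powerset, p ^ (insert v T).card *
        q ^ (V.card - (insert v T).card) *
        (if ((insert v T) ∩ e).card = 1 then (1 : ℝ) else 0) = p * q ^ (e.card - 1) := by
      intro v hv
      have h1 : ∀ T ∈ (V \ e).powerset, p ^ (insert v T).card *
        q ^ (V.card - (insert v T).card) *
        (if ((insert v T) ∩ e).card = 1 then (1 : ℝ) else 0) =
          (p * q ^ (e.card - 1)) * (p ^ T.card * q ^ ((V \ e).card - T.card)) := by
        intro T hT
        have hm : (v, T) ∈ e ×ˢ (V \ e).powerset := mem_product.2 ⟨hv, hT⟩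
        have k1 : insert v T ∩ e = {v} := key _ hm
        have k2 : v ∉ T := hnot _ hm
        have c1 : T.card ≤ (V \ e).card := card_le_card (mem_powerset.1 hT)
        have c2 : (V \ e).card + e.card = V.card := card_sdiff_add_card_eq_card he
        have c3 : 0 < e.card := card_pos.2 ⟨v, hv⟩
        rw [k1, card_insert_of_notMem k2, card_singleton, if_pos rfl,
          show V.card - (T.card + 1) = (e.card - 1) + ((V \ e).card - T.card) by omega]
        ring
      rw [sum_congr rfl h1, ← mul_sum, sum_pow_mul_eq_add_pow, hpq, one_pow, mul_one]
    rw [sum_congr rfl this, sum_const, nsmul_eq_mul]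
  · intro U _ _
    split_ifs <;> positivity

open Finset in
lemma hbd_step {α β : Type} [DecidableEq α] (V : Finset α) (J : Finset β)
    (e : β → Finset α) (j : ℕ) (he : ∀ i ∈ J, e i ⊆ V)
    (h1 : ∀ i ∈ J, 2 ^ j ≤ (e i).card) (h2 : ∀ i ∈ J, (e i).card ≤ 2 ^ (j + 1)) :
    ∃ U ⊆ V, (J.card : ℝ) / 8 ≤ ((J.filter (fun i => (U ∩ e i).card = 1)).card : ℝ) := by
  obtain ⟨p, hp⟩ : ∃ p : ℝ, p = 1 / (4 * 2 ^ j) := ⟨_, rfl⟩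
  have hpow : (1 : ℝ) ≤ 2 ^ j := one_le_pow₀ (by norm_num)
  have hp0 : 0 < p := by rw [hp]; positivity
  have hpm : p * 2 ^ j = 1 / 4 := by rw [hp]; field_simp
  have hp1 : p ≤ 1 / 4 := by nlinarith
  have hmean : ∀ i ∈ J, (1 : ℝ) / 8 ≤ ∑ U ∈ V.powerset, p ^ U.card * (1 - p) ^ (V.card - U.card) *
        (if (U ∩ e i).card = 1 then (1 : ℝ) else 0) := by
    intro i hi
    refine le_trans ?_ (hbd_prob V (e i) (he i hi) p (1 - p) hp0.le (by linarith) (by ring))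
    have a1 : (2 : ℝ) ^ j ≤ (e i).card := by exact_mod_cast h1 i hi
    have a2 : ((e i).card : ℝ) ≤ 2 * 2 ^ j := by
      have := h2 i hi
      rw [pow_succ, mul_comm] at this
      exact_mod_cast this
    have b : 1 + (((e i).card - 1 : ℕ) : ℝ) * (-p) ≤ (1 + (-p)) ^ ((e i).card - 1) :=
      one_add_mul_le_pow (by linarith) _
    have c : (((e i).card - 1 : ℕ) : ℝ) ≤ (e i).card := by exact_mod_cast Nat.sub_le _ _
    have d : (1 : ℝ) / 2 ≤ (1 - p) ^ ((e i).card - 1) := by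
      rw [← sub_eq_add_neg] at b
      refine le_trans ?_ b
      nlinarith
    have f : 1 / 4 ≤ ((e i).card : ℝ) * p := by nlinarith
    rw [← mul_assoc]
    nlinarith
  by_contra! hcon
  have hW : ∑ U ∈ V.powerset, p ^ U.card * (1 - p) ^ (V.card - U.card) = 1 := by
    rw [sum_pow_mul_eq_add_pow]; simp
  have hs : (J.card : ℝ) / 8 ≤ ∑ U ∈ V.powerset, p ^ U.card * (1 - p) ^ (V.card - U.card) *
      ((J.filter (fun i => (U ∩ e i).card = 1)).card : ℝ) := by
    have := sum_le_sum hmean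
    rw [sum_const, nsmul_eq_mul, sum_comm] at this
    calc (J.card : ℝ) / 8 = J.card * (1 / 8) := by ring
      _ ≤ _ := this
      _ = _ := by
        refine sum_congr rfl fun U _ => ?_
        rw [← mul_sum, sum_boole]
  have hlt : ∑ U ∈ V.powerset, p ^ U.card * (1 - p) ^ (V.card - U.card) *
      ((J.filter (fun i => (U ∩ e i).card = 1)).card : ℝ) <
      ∑ U ∈ V.powerset, p ^ U.card * (1 - p) ^ (V.card - U.card) * ((J.card : ℝ) / 8) := by
    refine sum_lt_sum_of_nonempty ⟨∅, by simp⟩ fun U hU => ?_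
    have : 0 < 1 - p := by linarith
    exact mul_lt_mul_of_pos_left (hcon U (mem_powerset.1 hU)) (by positivity)
  rw [← sum_mul, hW] at hlt
  linarith

open Finset in
lemma hbd_rounds {α β : Type} [DecidableEq α] (V : Finset α)
    (e : β → Finset α) (j : ℕ) (R : ℕ) : ∀ (J : Finset β), (∀ i ∈ J, e i ⊆ V) →
    (∀ i ∈ J, 2 ^ j ≤ (e i).card) → (∀ i ∈ J, (e i).card ≤ 2 ^ (j + 1)) →
    (J.card : ℝ) * (7 / 8) ^ R < 1 →
    ∃ U : ℕ → Finset α, (∀ m, U m ⊆ V) ∧ ∀ i ∈ J, ∃ m < R, (U m ∩ e i).card = 1 := by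
  induction R with
  | zero =>
    intro J _ _ _ h
    have : J.card < 1 := by
      rw [pow_zero, mul_one] at h
      exact_mod_cast h
    have hJ : J = ∅ := card_eq_zero.1 (by omega)
    exact ⟨fun _ => ∅, by simp, by simp [hJ]⟩
  | succ R ih =>
    intro J he h1 h2 h
    obtain ⟨U0, hU0, hc⟩ := hbd_step V J e j he h1 h2
    have hsplit := card_filter_add_card_filter_not (s := J) (fun i => (U0 ∩ e i).card = 1)
    obtain ⟨U, hU, hm⟩ := ih (J.filter (fun i => ¬ (U0 ∩ e i).card = 1))
      (fun i hi => he i (mem_filter.1 hi).1) (fun i hi => h1 i (mem_filter.1 hi).1)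
      (fun i hi => h2 i (mem_filter.1 hi).1) (by
        refine lt_of_le_of_lt ?_ h
        rw [pow_succ', ← mul_assoc]
        gcongr
        have : ((J.filter (fun i => (U0 ∩ e i).card = 1)).card : ℝ) +
          ((J.filter (fun i => ¬ (U0 ∩ e i).card = 1)).card : ℝ) = J.card := by
          exact_mod_cast hsplit
        linarith)
    refine ⟨fun m => if m = R then U0 else U m, fun m => ?_, fun i hi => ?_⟩
    · dsimp only
      split_ifs
      · exact hU0
      · exact hU m
    · by_cases hx : (U0 ∩ e i).card = 1
      · exact ⟨R, by omega, by simpa using hx⟩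
      · obtain ⟨m, hmR, hmc⟩ := hm i (mem_filter.2 ⟨hi, hx⟩)
        exact ⟨m, by omega, by simpa [hmR.ne] using hmc⟩

theorem hbd_upper_bound :
    ∃ C : ℝ, 0 < C ∧ ∀ n : ℕ, 2 ≤ n →
      ∀ (α β : Type) [DecidableEq α] (Vset : Finset α) (I : Finset β)
        (e : β → Finset α),
        (∀ i ∈ I, e i ⊆ Vset) → (∀ i ∈ I, (e i).Nonempty) →
        Vset.card + I.card ≤ n →
        ∃ k : ℕ, (k : ℝ) ≤ C * (Real.logb 2 n) ^ 2 ∧ HasHBD Vset I e k := by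
  refine ⟨24, by norm_num, ?_⟩
  intro n hn α β _ V I e he hne hcard
  obtain ⟨L, hL⟩ : ∃ L, L = Nat.log 2 n + 1 := ⟨_, rfl⟩
  have hnL : n < 2 ^ L := by rw [hL]; exact Nat.lt_pow_succ_log_self (by norm_num) n
  refine ⟨L * (6 * L), ?_, ?_⟩
  · have h1 : (1 : ℝ) ≤ Real.logb 2 n := by
      rw [Real.le_logb_iff_rpow_le (by norm_num) (by positivity)]
      simpa using (by exact_mod_cast hn : (2 : ℝ) ≤ n)
    have h2 : (Nat.log 2 n : ℝ) ≤ Real.logb 2 n := by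
      have := Real.natLog_le_logb n 2
      exact_mod_cast this
    have h3 : (L : ℝ) ≤ 2 * Real.logb 2 n := by
      rw [hL]; push_cast; linarith
    have h0 : (0 : ℝ) ≤ L := by positivity
    push_cast
    nlinarith
  · have hbound : (n : ℝ) * (7 / 8) ^ (6 * L) < 1 := by
      have a : ((7 : ℝ) / 8) ^ (6 * L) ≤ (1 / 2) ^ L := by
        rw [pow_mul]
        gcongr
        norm_num
      have b : (n : ℝ) < 2 ^ L := by exact_mod_cast hnL
      calc (n : ℝ) * (7 / 8) ^ (6 * L) ≤ n * (1 / 2) ^ L := by gcongr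
        _ < 2 ^ L * (1 / 2) ^ L := by gcongr
        _ = 1 := by rw [← mul_pow]; norm_num
    have hall : ∀ j : ℕ, ∃ U : ℕ → Finset α, (∀ m, U m ⊆ V) ∧
        ∀ i ∈ I.filter (fun i => Nat.log 2 (e i).card = j),
          ∃ m < 6 * L, (U m ∩ e i).card = 1 := by
      intro j
      apply hbd_rounds V e j
      · exact fun i hi => he i (Finset.mem_filter.1 hi).1
      · intro i hi
        obtain ⟨hi, hj⟩ := Finset.mem_filter.1 hi
        rw [← hj]
        exact Nat.pow_log_le_self 2 (Finset.card_pos.2 (hne i hi)).ne'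
      · intro i hi
        obtain ⟨hi, hj⟩ := Finset.mem_filter.1 hi
        rw [← hj]
        exact (Nat.lt_pow_succ_log_self (by norm_num) _).le
      · refine lt_of_le_of_lt ?_ hbound
        gcongr
        exact (Finset.card_filter_le _ _).trans (by omega)
    choose U hU hUm using hall
    have hcol : ∀ i : β, ∃ c : Fin L × Fin (6 * L), i ∈ I → (U c.1 c.2 ∩ e i).card = 1 := by
      intro i
      by_cases hi : i ∈ I
      · obtain ⟨m, hm, hmc⟩ := hUm (Nat.log 2 (e i).card) i (Finset.mem_filter.2 ⟨hi, rfl⟩)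
        have hlog : Nat.log 2 (e i).card < L := by
          have h1 : (e i).card ≤ n := (Finset.card_le_card (he i hi)).trans (by omega)
          have := Nat.log_mono_right (b := 2) h1
          omega
        exact ⟨(⟨_, hlog⟩, ⟨m, hm⟩), fun _ => hmc⟩
      · exact ⟨(⟨0, by omega⟩, ⟨0, by omega⟩), fun h => absurd h hi⟩
    choose c hc using hcol
    refine ⟨fun i => finProdFinEquiv (c i), fun m => ?_⟩
    refine ⟨U (finProdFinEquiv.symm m).1 (finProdFinEquiv.symm m).2, hU _ _, ?_⟩
    rintro i hi rfl
    rw [Equiv.symm_apply_apply]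
    exact hc i hi
end

section
/- (Refined upper bound, footnote to Corollary 1.4.) There exists an absolute constant C such that every hypergraph H = (V, (e_i)_{i ∈ I}) with all hyperedges nonempty, |V| ≥ 2 and |I| ≥ 2 admits a hypergraph bipartite decomposition with at most C · log₂|V| · log₂|I| colors. -/
theorem hbd_bern (M k : ℕ) (h : 2 * k ≤ M + 1) : (M + 1) ^ k ≤ 2 * M ^ k := by
  have key : ∀ k : ℕ, (M + 1) ^ (k + 1) ≤ (M + 1) * M ^ k + k * (M + 1) ^ k := by
    intro k
    induction k with
    | zero => simp
    | succ k ih =>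
      have h1 : (M + 1) ^ (k + 1 + 1) = M * (M + 1) ^ (k + 1) + (M + 1) ^ (k + 1) := by ring
      have h2 := Nat.mul_le_mul_left M ih
      have h3 : M * (k * (M + 1) ^ k) ≤ k * (M + 1) ^ (k + 1) := by
        have : k * (M + 1) ^ (k + 1) = M * (k * (M + 1) ^ k) + k * (M + 1) ^ k := by ring
        omega
      have h4 : M * ((M + 1) * M ^ k + k * (M + 1) ^ k)
          = (M + 1) * M ^ (k + 1) + M * (k * (M + 1) ^ k) := by ring
      have h5 : (k + 1) * (M + 1) ^ (k + 1) = k * (M + 1) ^ (k + 1) + (M + 1) ^ (k + 1) := by ring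
      omega
  have h1 := key k
  have h2 : 2 * k * (M + 1) ^ k ≤ (M + 1) * (M + 1) ^ k := Nat.mul_le_mul_right _ h
  have h3 : (M + 1) * (M + 1) ^ k ≤ (M + 1) * (2 * M ^ k) := by
    rw [pow_succ'] at h1
    nlinarith
  exact Nat.le_of_mul_le_mul_left h3 (Nat.succ_pos M)

theorem hbd_count {α : Type} [Fintype α] [DecidableEq α] (e : Finset α) (M : ℕ)
    (h1 : M + 1 ≤ 4 * e.card) (h2 : 2 * e.card ≤ M + 1) :
    (M + 1) ^ Fintype.card α ≤ 8 * (Finset.univ.filter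
      (fun f : α → Fin (M + 1) => ((Finset.univ.filter (fun v => f v = 0)) ∩ e).card = 1)).card := by
  let P : α → Finset (α → Fin (M + 1)) := fun v =>
    Fintype.piFinset (fun w => if w ∈ e then (if w = v then {0} else {0}ᶜ) else Finset.univ)
  have hP : ∀ v ∈ e, (P v).card = M ^ (e.card - 1) * (M + 1) ^ (Fintype.card α - e.card) := by
    intro v hv
    simp only [P, Fintype.card_piFinset]
    rw [← Finset.prod_mul_prod_compl e]
    congr 1
    · rw [← Finset.mul_prod_erase e _ hv]
      rw [Finset.prod_congr rfl (g := fun _ => M)]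
      · simp [hv, Finset.card_erase_of_mem]
      · intro w hw
        rw [Finset.mem_erase] at hw
        simp [hw.1, hw.2, Finset.card_compl]
    · rw [Finset.prod_congr rfl (g := fun _ => M + 1)]
      · simp [Finset.card_compl]
      · intro w hw
        rw [Finset.mem_compl] at hw
        simp [hw]
  have hmem : ∀ v ∈ e, ∀ f ∈ P v, f v = 0 ∧ ∀ w ∈ e, w ≠ v → f w ≠ 0 := by
    intro v hv f hf
    simp only [P, Fintype.mem_piFinset] at hf
    refine ⟨by simpa [hv] using hf v, fun w hw hwv => by simpa [hw, hwv] using hf w⟩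
  have hdisj : (e : Set α).PairwiseDisjoint P := by
    intro v hv w hw hvw
    rw [Function.onFun, Finset.disjoint_left]
    intro f hf hf'
    exact (hmem w hw f hf').2 v hv hvw (hmem v hv f hf).1
  have hsub : e.biUnion P ⊆ Finset.univ.filter
      (fun f : α → Fin (M + 1) =>
        ((Finset.univ.filter (fun v => f v = 0)) ∩ e).card = 1) := by
    intro f hf
    rw [Finset.mem_biUnion] at hf
    obtain ⟨v, hv, hf⟩ := hf
    obtain ⟨a, b⟩ := hmem v hv f hf
    simp only [Finset.mem_filter, Finset.mem_univ, true_and]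
    rw [Finset.card_eq_one]
    refine ⟨v, ?_⟩
    ext w
    simp only [Finset.mem_inter, Finset.mem_filter, Finset.mem_univ, true_and,
      Finset.mem_singleton]
    constructor
    · rintro ⟨h, hw⟩
      by_contra hne
      exact b w hw hne h
    · rintro rfl
      exact ⟨a, hv⟩
  have hc := Finset.card_le_card hsub
  rw [Finset.card_biUnion hdisj, Finset.sum_congr rfl hP, Finset.sum_const, smul_eq_mul] at hc
  refine le_trans ?_ (Nat.mul_le_mul_left 8 hc)
  have hle : e.card ≤ Fintype.card α := Finset.card_le_univ e
  obtain ⟨r, hr⟩ := Nat.exists_eq_add_of_le hle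
  obtain ⟨s, hs⟩ : ∃ s, e.card = s + 1 := ⟨e.card - 1, by omega⟩
  rw [hr, Nat.add_sub_cancel_left, hs, Nat.add_sub_cancel, pow_add, pow_succ]
  have hb := hbd_bern M s (by omega)
  have h3 : M + 1 ≤ 4 * (s + 1) := by omega
  calc (M + 1) ^ s * (M + 1) * (M + 1) ^ r
      ≤ (2 * M ^ s) * (4 * (s + 1)) * (M + 1) ^ r := by gcongr
    _ = _ := by ring

theorem hbd_avg {α β : Type} [DecidableEq α] (V : Finset α) (I : Finset β)
    (e : β → Finset α) (M : ℕ) (hV : ∀ i ∈ I, e i ⊆ V)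
    (h : ∀ i ∈ I, M + 1 ≤ 4 * (e i).card ∧ 2 * (e i).card ≤ M + 1) :
    ∃ U ⊆ V, I.card ≤ 8 * (I.filter (fun i => (U ∩ e i).card = 1)).card := by
  by_contra hcon
  push Not at hcon
  let W : (V → Fin (M + 1)) → Finset α := fun f =>
    (Finset.univ.filter (fun v => f v = 0)).map (Function.Embedding.subtype _)
  have hW : ∀ f, W f ⊆ V := by
    intro f x hx
    simp only [W, Finset.mem_map] at hx
    obtain ⟨y, -, rfl⟩ := hx
    exact y.2
  have hcard : ∀ i ∈ I, ∀ f, (W f ∩ e i).card =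
      ((Finset.univ.filter (fun v => f v = 0)) ∩ (e i).subtype (· ∈ V)).card := by
    intro i hi f
    rw [← Finset.card_map (Function.Embedding.subtype (· ∈ V)), Finset.map_inter,
      Finset.subtype_map_of_mem (hV i hi)]
  have hsum : ∀ i ∈ I, (M + 1) ^ V.card ≤
      8 * (Finset.univ.filter (fun f => (W f ∩ e i).card = 1)).card := by
    intro i hi
    have hc : ((e i).subtype (· ∈ V)).card = (e i).card := by
      rw [← Finset.card_map (Function.Embedding.subtype (· ∈ V)),
        Finset.subtype_map_of_mem (hV i hi)]
    have := hbd_count ((e i).subtype (· ∈ V)) M (by rw [hc]; exact (h i hi).1)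
      (by rw [hc]; exact (h i hi).2)
    rw [Fintype.card_coe] at this
    simpa only [hcard i hi] using this
  have h1 : ∑ i ∈ I, (M + 1) ^ V.card ≤
      ∑ i ∈ I, 8 * (Finset.univ.filter (fun f => (W f ∩ e i).card = 1)).card :=
    Finset.sum_le_sum hsum
  have h2 : ∑ f : V → Fin (M + 1), 8 * (I.filter (fun i => (W f ∩ e i).card = 1)).card
      < ∑ f : V → Fin (M + 1), I.card :=
    Finset.sum_lt_sum_of_nonempty Finset.univ_nonempty (fun f _ => hcon (W f) (hW f))
  have h3 : ∑ i ∈ I, 8 * (Finset.univ.filter (fun f => (W f ∩ e i).card = 1)).card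
      = ∑ f : V → Fin (M + 1), 8 * (I.filter (fun i => (W f ∩ e i).card = 1)).card := by
    simp only [Finset.card_filter, ← Finset.mul_sum]
    rw [Finset.sum_comm]
  simp only [Finset.sum_const, smul_eq_mul, Finset.card_univ, Fintype.card_fun,
    Fintype.card_fin, Fintype.card_coe] at h1 h2
  rw [h3] at h1
  have := lt_of_le_of_lt h1 h2
  rw [mul_comm] at this
  exact lt_irrefl _ this

theorem hbd_greedy {α β : Type} [DecidableEq α] (V : Finset α)
    (e : β → Finset α) (M : ℕ) (t : ℕ) : ∀ (I : Finset β), (∀ i ∈ I, e i ⊆ V) →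
    (∀ i ∈ I, M + 1 ≤ 4 * (e i).card ∧ 2 * (e i).card ≤ M + 1) →
    I.card * 7 ^ t < 8 ^ t →
    ∃ (c : β → ℕ) (U : ℕ → Finset α), (∀ m, U m ⊆ V) ∧
      ∀ i ∈ I, c i < t ∧ (U (c i) ∩ e i).card = 1 := by
  classical
  induction t with
  | zero =>
    intro I _ _ hI
    have : I = ∅ := by
      rw [← Finset.card_eq_zero]; simpa using hI
    subst this
    exact ⟨fun _ => 0, fun _ => ∅, by simp, by simp⟩
  | succ t ih =>
    intro I hV h hI
    obtain ⟨U, hU, hUI⟩ := hbd_avg V I e M hV h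
    have hs := Finset.card_filter_add_card_filter_not (s := I)
      (fun i => (U ∩ e i).card = 1)
    obtain ⟨c, W, hW, hc⟩ := ih (I.filter (fun i => ¬ (U ∩ e i).card = 1))
      (fun i hi => hV i (Finset.mem_filter.1 hi).1)
      (fun i hi => h i (Finset.mem_filter.1 hi).1) (by
        have h8 : 8 * (I.filter (fun i => ¬ (U ∩ e i).card = 1)).card ≤ 7 * I.card := by omega
        have := Nat.mul_le_mul_right (7 ^ t) h8
        rw [pow_succ, pow_succ] at hI
        nlinarith)
    refine ⟨fun i => if (U ∩ e i).card = 1 then t else c i,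
      fun m => if m = t then U else W m, ?_, ?_⟩
    · intro m
      dsimp only
      split_ifs
      exacts [hU, hW m]
    · intro i hi
      by_cases hg : (U ∩ e i).card = 1
      · simp [hg]
      · have := hc i (Finset.mem_filter.2 ⟨hi, hg⟩)
        simp only [hg, if_false]
        refine ⟨by omega, ?_⟩
        rw [if_neg (by omega)]
        exact this.2

theorem hbd_nat {α β : Type} [DecidableEq α] (V : Finset α) (I : Finset β)
    (e : β → Finset α) (hV : ∀ i ∈ I, e i ⊆ V) (hne : ∀ i ∈ I, (e i).Nonempty) :
    HasHBD V I e ((Nat.log 2 V.card + 1) * (6 * (Nat.log 2 I.card + 1))) := by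
  classical
  set L := Nat.log 2 V.card + 1 with hL
  set t := 6 * (Nat.log 2 I.card + 1) with ht
  have hIt : I.card * 7 ^ t < 8 ^ t := by
    have h1 : I.card < 2 ^ (Nat.log 2 I.card + 1) := Nat.lt_pow_succ_log_self (by norm_num) _
    calc I.card * 7 ^ t < 2 ^ (Nat.log 2 I.card + 1) * 7 ^ t := by gcongr
      _ = (2 * 7 ^ 6) ^ (Nat.log 2 I.card + 1) := by rw [ht, pow_mul, ← mul_pow]
      _ ≤ (8 ^ 6) ^ (Nat.log 2 I.card + 1) := by gcongr; norm_num
      _ = 8 ^ t := by rw [ht, pow_mul]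
  have hj : ∀ j : ℕ, ∃ (c : β → ℕ) (U : ℕ → Finset α), (∀ m, U m ⊆ V) ∧
      ∀ i ∈ I.filter (fun i => Nat.log 2 (e i).card = j),
        c i < t ∧ (U (c i) ∩ e i).card = 1 := by
    intro j
    apply hbd_greedy V e (2 ^ (j + 2) - 1) t
    · exact fun i hi => hV i (Finset.mem_filter.1 hi).1
    · intro i hi
      obtain ⟨hi', hij⟩ := Finset.mem_filter.1 hi
      subst hij
      have h0 : (e i).card ≠ 0 := (Finset.card_pos.2 (hne i hi')).ne'
      have h1 := Nat.pow_log_le_self 2 h0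
      have h2 := Nat.lt_pow_succ_log_self (b := 2) (by norm_num) (e i).card
      rw [Nat.succ_eq_add_one, pow_succ] at h2
      rw [Nat.sub_add_cancel Nat.one_le_two_pow, pow_add]
      omega
    · refine lt_of_le_of_lt ?_ hIt
      gcongr
      exact Finset.filter_subset _ _
  choose c U hU hc using hj
  have hpos : 0 < L * t := by positivity
  have htpos : 0 < t := by positivity
  refine ⟨fun i => ⟨(t * Nat.log 2 (e i).card + c (Nat.log 2 (e i).card) i) % (L * t),
    Nat.mod_lt _ hpos⟩, fun m => ⟨U (m / t) (m % t), hU _ _, ?_⟩⟩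
  intro i hi him
  have hci := hc _ i (Finset.mem_filter.2 ⟨hi, rfl⟩)
  have hlog : Nat.log 2 (e i).card < L := by
    rw [hL, Nat.lt_succ_iff]
    exact Nat.log_mono_right (Finset.card_le_card (hV i hi))
  have hlt : t * Nat.log 2 (e i).card + c (Nat.log 2 (e i).card) i < L * t := by
    have := Nat.mul_le_mul_left t (Nat.succ_le_of_lt hlog)
    rw [Nat.mul_succ] at this
    rw [mul_comm L t]
    omega
  have hm : (m : ℕ) = t * Nat.log 2 (e i).card + c (Nat.log 2 (e i).card) i := by
    rw [← him]
    exact Nat.mod_eq_of_lt hlt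
  rw [hm, Nat.mul_add_div htpos, Nat.mul_add_mod, Nat.div_eq_of_lt hci.1, Nat.mod_eq_of_lt hci.1]
  exact hci.2

theorem hbd_log (n : ℕ) (h : 2 ≤ n) : ((Nat.log 2 n + 1 : ℕ) : ℝ) ≤ 2 * Real.logb 2 n := by
  have h1 : ((Nat.log 2 n : ℕ) : ℝ) ≤ Real.logb 2 n := by
    exact_mod_cast Real.natLog_le_logb n 2
  have h2 : 1 ≤ Nat.log 2 n := Nat.log_pos (by norm_num) h
  have h3 : (1 : ℝ) ≤ (Nat.log 2 n : ℕ) := by exact_mod_cast h2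
  push_cast
  linarith


/-- Refined upper bound (footnote to Corollary 1.4): every hypergraph with at least two
vertices and at least two hyperedges admits an HBD with at most
`C · log₂|V| · log₂|I|` colors. -/
theorem hbd_refined_upper_bound :
    ∃ C : ℝ, 0 < C ∧
      ∀ (α β : Type) [DecidableEq α] (Vset : Finset α) (I : Finset β)
        (e : β → Finset α),
        (∀ i ∈ I, e i ⊆ Vset) → (∀ i ∈ I, (e i).Nonempty) →
        2 ≤ Vset.card → 2 ≤ I.card →
        ∃ k : ℕ, (k : ℝ) ≤ C * Real.logb 2 Vset.card * Real.logb 2 I.card ∧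
          HasHBD Vset I e k := by
  refine ⟨24, by norm_num, ?_⟩
  intro α β _ V I e hV hne h2V h2I
  refine ⟨_, ?_, hbd_nat V I e hV hne⟩
  have h1 := hbd_log _ h2V
  have h2 := hbd_log _ h2I
  have h3 := mul_le_mul h1 h2 (Nat.cast_nonneg _) (le_trans (Nat.cast_nonneg _) h1)
  push_cast at h3 ⊢
  nlinarith
end

section
/- (Tightness part of Corollary 1.4.) There exists a constant c > 0 such that for every n₀ there exist an integer n ≥ n₀ and a hypergraph H = (V, (e_i)_{i ∈ I}) with all hyperedges nonempty and combinatorial size |V| + |I| = n, such that every partition of I into classes F_1, …, F_k in which each class F_m admits a subset U_m ⊆ V with |U_m ∩ e_i| = 1 for every i ∈ F_m must satisfy k ≥ c · (log₂ n)². -/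
open Finset
set_option linter.unusedSectionVars false
set_option linter.unusedVariables false

/-- product weight -/
noncomputable def wt {V : Type} [Fintype V] [DecidableEq V] (p : ℝ) (W : Finset V)
    (S : Finset V) : ℝ :=
  (∏ v ∈ S, if v ∈ W then 0 else p) * ∏ v ∈ Sᶜ, (1 - p)

section
variable {V : Type} [Fintype V] [DecidableEq V]

lemma wt_nonneg {p : ℝ} (h0 : 0 ≤ p) (h1 : p ≤ 1) (W S : Finset V) : 0 ≤ wt p W S := by
  unfold wt
  refine mul_nonneg (prod_nonneg fun v _ => ?_) (prod_nonneg fun v _ => by linarith)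
  split_ifs <;> linarith

lemma wt_le {p : ℝ} (h0 : 0 ≤ p) (h1 : p ≤ 1) (W S : Finset V) : wt p W S ≤ wt p ∅ S := by
  unfold wt
  refine mul_le_mul_of_nonneg_right (prod_le_prod (fun v _ => ?_) fun v _ => ?_)
    (prod_nonneg fun v _ => by linarith)
  · split_ifs <;> linarith
  · split_ifs <;> simp_all

lemma wt_eq_zero {p : ℝ} (W S : Finset V) (h : ¬ Disjoint S W) : wt p W S = 0 := by
  unfold wt
  rw [Finset.not_disjoint_iff] at h
  obtain ⟨v, hv, hw⟩ := h
  rw [prod_eq_zero hv (by simp [hw]), zero_mul]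

lemma wt_sum {p : ℝ} (W : Finset V) : ∑ S, wt p W S = (1 - p) ^ #W := by
  unfold wt
  rw [← Fintype.prod_add]
  rw [← Finset.prod_subset (subset_univ W)]
  · rw [← prod_const]
    refine prod_congr rfl fun v hv => by simp [hv]
  · intro v _ hv
    simp [hv]

lemma wt_exp {p : ℝ} (W U : Finset V) :
    ∑ S, wt p W S * (1/2) ^ #(S ∩ U) = (1 - p) ^ #W * (1 - p/2) ^ #(U \ W) := by
  have h1 : ∀ S : Finset V, wt p W S * (1/2) ^ #(S ∩ U) =
      (∏ v ∈ S, (if v ∈ W then 0 else p) * (if v ∈ U then 1/2 else 1)) * ∏ v ∈ Sᶜ, (1 - p) := by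
    intro S
    unfold wt
    have : (∏ v ∈ S, if v ∈ U then (1/2 : ℝ) else 1) = (1/2) ^ #(S ∩ U) := by
      rw [prod_ite_mem, prod_const]
    rw [prod_mul_distrib, this]
    ring
  simp_rw [h1]
  rw [← Fintype.prod_add, ← prod_const, ← prod_const]
  rw [← Finset.prod_subset (subset_univ (W ∪ U \ W))]
  · rw [prod_union disjoint_sdiff]
    congr 1
    · exact prod_congr rfl fun v hv => by simp [hv]
    · refine prod_congr rfl fun v hv => ?_
      rw [mem_sdiff] at hv
      simp [hv]; ring
  · intro v _ hv
    simp only [mem_union, mem_sdiff] at hv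
    have : v ∉ W ∧ v ∉ U := by tauto
    simp [this]

lemma wt_mod {p : ℝ} (h0 : 0 ≤ p) (h1 : p ≤ 1) (W S T : Finset V) :
    wt p W S * wt p W T ≤ wt p W (S ⊓ T) * wt p W (S ⊔ T) := by
  have h : ∀ S : Finset V, wt p W S =
      ∏ v, if v ∈ S then (if v ∈ W then 0 else p) else (1 - p) := by
    intro S
    unfold wt
    rw [← prod_mul_prod_compl S]
    congr 1
    · exact prod_congr rfl fun v hv => by rw [if_pos hv]
    · exact prod_congr rfl fun v hv => by rw [if_neg (mem_compl.1 hv)]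
  simp only [h, ← prod_mul_distrib]
  apply le_of_eq
  refine prod_congr rfl fun v _ => ?_
  simp only [inf_eq_inter, sup_eq_union, mem_inter, mem_union]
  by_cases a : v ∈ S <;> by_cases b : v ∈ T <;> simp [a, b, mul_comm]

/-- indicator of being hit at least twice -/
noncomputable def ind2 (U S : Finset V) : ℝ := if 2 ≤ #(S ∩ U) then 1 else 0

lemma ind2_nonneg (U S : Finset V) : 0 ≤ ind2 U S := by unfold ind2; split_ifs <;> norm_num

lemma ind2_mono (U : Finset V) : Monotone (ind2 U) := by
  intro S T h
  have : #(S ∩ U) ≤ #(T ∩ U) := card_le_card (inter_subset_inter_right h)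
  unfold ind2
  split_ifs <;> first | omega | norm_num

lemma wt_one {p : ℝ} (h0 : 0 ≤ p) (h1 : p ≤ 1) (W U : Finset V) :
    (1 - p) ^ #W * (1 - 2 * (1 - p/2) ^ #(U \ W)) ≤ ∑ S, wt p W S * ind2 U S := by
  have : (1 - p) ^ #W * (1 - 2 * (1 - p/2) ^ #(U \ W)) =
      ∑ S, wt p W S * (1 - 2 * (1/2) ^ #(S ∩ U)) := by
    simp only [mul_sub, sum_sub_distrib, mul_one, wt_sum, mul_left_comm _ (2:ℝ), ← mul_sum, wt_exp]
  rw [this]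
  refine sum_le_sum fun S _ => mul_le_mul_of_nonneg_left ?_ (wt_nonneg h0 h1 W S)
  unfold ind2
  split_ifs with h
  · have : (0:ℝ) < (1/2) ^ #(S ∩ U) := by positivity
    linarith
  · have : #(S ∩ U) = 0 ∨ #(S ∩ U) = 1 := by omega
    rcases this with h | h <;> rw [h] <;> norm_num

lemma wt_many {ι : Type} [DecidableEq ι] {p : ℝ} (h0 : 0 ≤ p) (h1 : p < 1) (W : Finset V) (U : ι → Finset V)
    (R : Finset ι) (f : ι → ℝ) (hf : ∀ m ∈ R, f m ≤ 1 - 2 * (1 - p/2) ^ #(U m \ W))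
    (hf0 : ∀ m ∈ R, 0 ≤ f m) :
    (1 - p) ^ #W * ∏ m ∈ R, f m ≤ ∑ S, wt p W S * ∏ m ∈ R, ind2 (U m) S := by
  induction R using Finset.induction_on with
  | empty => simp [wt_sum]
  | insert a R ha ih =>
    have ih' := ih (fun m hm => hf m (mem_insert_of_mem hm)) (fun m hm => hf0 m (mem_insert_of_mem hm))
    have hz : 0 < (1 - p) ^ #W := by apply pow_pos; linarith
    have key := fkg (ind2 (U a)) (fun S => ∏ m ∈ R, ind2 (U m) S) (wt p W)
      (fun S => wt_nonneg h0 h1.le W S) (fun S => ind2_nonneg _ _)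
      (fun S => prod_nonneg fun m _ => ind2_nonneg _ _) (ind2_mono _)
      (fun S T h => prod_le_prod (fun m _ => ind2_nonneg _ _) (fun m _ => ind2_mono _ h))
      (wt_mod h0 h1.le W)
    simp only [prod_insert ha]
    rw [wt_sum] at key
    have h3 : (1 - p) ^ #W * f a ≤ ∑ S, wt p W S * ind2 (U a) S :=
      (mul_le_mul_of_nonneg_left (hf a (mem_insert_self _ _)) hz.le).trans (wt_one h0 h1.le W (U a))
    have h4 := mul_le_mul h3 ih' (mul_nonneg hz.le (prod_nonneg fun m hm => hf0 m (mem_insert_of_mem hm)))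
      ((mul_nonneg hz.le (hf0 a (mem_insert_self _ _))).trans h3)
    have h5 := h4.trans key
    have h6 : (1 - p) ^ #W * ((1 - p) ^ #W * (f a * ∏ m ∈ R, f m)) ≤
       (1 - p) ^ #W * ∑ S, wt p W S * (ind2 (U a) S * ∏ m ∈ R, ind2 (U m) S) := by
      refine le_trans (le_of_eq (by ring)) h5
    exact le_of_mul_le_mul_left h6 hz

/-- absorption step -/
lemma absorb_step {ι : Type} [Fintype ι] [DecidableEq ι] (U : ι → Finset V) (T : ℕ) (A : Finset ι) :
    ∃ A', A ⊆ A' ∧ #(A'.biUnion U) ≤ #(A.biUnion U) + T * #(A' \ A) ∧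
      ∀ m ∉ A', T < #(U m \ A'.biUnion U) := by
  let F : Finset (Finset ι) := univ.filter fun A' => A ⊆ A' ∧ #(A'.biUnion U) ≤ #(A.biUnion U) + T * #(A' \ A)
  obtain ⟨A', hA', hmax⟩ := Finset.exists_max_image F card ⟨A, by simp [F]⟩
  simp only [F, mem_filter, mem_univ, true_and] at hA' hmax
  refine ⟨A', hA'.1, hA'.2, fun m hm => ?_⟩
  by_contra hlt
  push Not at hlt
  have := hmax (insert m A') ⟨hA'.1.trans (subset_insert _ _), ?_⟩
  · rw [card_insert_of_notMem hm] at this; omega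
  · have hmA : m ∉ A := fun h => hm (hA'.1 h)
    rw [insert_sdiff_of_notMem _ hmA, card_insert_of_notMem (by simp [hm]), biUnion_insert,
      ← sdiff_union_self_eq_union]
    have := card_union_le (U m \ A'.biUnion U) (A'.biUnion U)
    have := hA'.2
    rw [mul_add]
    omega

lemma absorb {ι : Type} [Fintype ι] [DecidableEq ι] (U : ι → Finset V) :
    ∃ i : ι → ℕ, ∀ j, #((univ.filter fun m => i m ≤ j).biUnion U) ≤
        ∑ m ∈ univ.filter fun m => i m ≤ j, 16 * 2 ^ i m ∧
      ∀ m, j < i m → 16 * 2 ^ (i m - 1) < #(U m \ (univ.filter fun m => i m ≤ j).biUnion U) := by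
  choose g hg1 hg2 hg3 using fun (T : ℕ) (A : Finset ι) => absorb_step U T A
  let A : ℕ → Finset ι := fun j => Nat.rec (g (16 * 2^0) ∅) (fun j B => g (16 * 2 ^ (j+1)) B) j
  have hA0 : A 0 = g (16 * 2^0) ∅ := rfl
  have hAs : ∀ j, A (j+1) = g (16 * 2^(j+1)) (A j) := fun j => rfl
  have hmono : Monotone A := monotone_nat_of_le_succ fun j => by rw [hAs]; exact hg1 _ _
  have hres : ∀ j, ∀ m ∉ A j, 16 * 2 ^ j < #(U m \ (A j).biUnion U) := by
    intro j
    cases j with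
    | zero => exact hg3 _ _
    | succ j => exact hg3 _ _
  have hex : ∀ m, ∃ j, m ∈ A j := by
    intro m
    refine ⟨Fintype.card V, ?_⟩
    by_contra h
    have h1 := hres _ m h
    have h2 := card_le_univ (U m \ (A (Fintype.card V)).biUnion U)
    have h3 := (Nat.lt_two_pow_self : Fintype.card V < 2 ^ Fintype.card V)
    omega
  classical
  let i : ι → ℕ := fun m => sInf {j | m ∈ A j}
  have hi : ∀ m j, i m ≤ j ↔ m ∈ A j := fun m j =>
    ⟨fun h => hmono h (Nat.sInf_mem (hex m) : m ∈ A (i m)), fun h => Nat.sInf_le h⟩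
  have hF : ∀ j, (univ.filter fun m => i m ≤ j) = A j := fun j => by ext m; simp [hi]
  refine ⟨i, fun j => ?_⟩
  rw [hF]
  constructor
  · induction j with
    | zero =>
      have := hg2 (16 * 2^0) ∅
      rw [← hA0] at this
      refine this.trans ?_
      have h : ∀ m ∈ A 0, 16 * 2 ^ i m = 16 * 2 ^ 0 := fun m hm => by
        have := (hi m 0).2 hm
        rw [Nat.le_zero.1 this]
      rw [sum_congr rfl h]
      simp [mul_comm]
    | succ j ih =>
      have := hg2 (16 * 2^(j+1)) (A j)
      rw [← hAs] at this
      refine this.trans ?_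
      rw [← sum_sdiff (hmono (Nat.le_succ j)), add_comm]
      refine add_le_add ?_ ih
      have h : ∀ m ∈ A (j+1) \ A j, 16 * 2 ^ i m = 16 * 2 ^ (j+1) := fun m hm => by
        rw [mem_sdiff, ← hi m j, ← hi m (j+1)] at hm
        rw [show i m = j + 1 by omega]
      rw [Nat.succ_eq_add_one, sum_congr rfl h]
      simp [mul_comm]
  · intro m hm
    have h1 : m ∉ A (i m - 1) := by rw [← hi]; omega
    refine (hres _ m h1).trans_le (card_le_card (sdiff_subset_sdiff subset_rfl ?_))
    exact biUnion_subset_biUnion_of_subset_left _ (hmono (by omega))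

end

/-- geometric cost -/
noncomputable def gw (i j : ℕ) : ℝ := if i ≤ j then (1/2) ^ (j - i) else (1/2) ^ (i - j)

lemma gw_nonneg (i j : ℕ) : 0 ≤ gw i j := by unfold gw; split_ifs <;> positivity

lemma gw_sum (i L : ℕ) : ∑ j ∈ range L, gw i j ≤ 3 := by
  have : ∑ j ∈ range L, gw i j ≤ if L ≤ i then (1/2) ^ (i - L) else 3 - 2 * (1/2) ^ (L - i) := by
    induction L with
    | zero => simp
    | succ L ih =>
      rw [sum_range_succ]
      unfold gw at *
      rcases lt_trichotomy L i with h | h | h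
      · rw [if_pos h.le] at ih
        rw [if_pos (by omega : L + 1 ≤ i), if_neg (by omega)]
        obtain ⟨d, rfl⟩ : ∃ d, i = L + 1 + d := ⟨i - (L+1), by omega⟩
        rw [show L + 1 + d - L = d + 1 by omega] at *
        rw [show L + 1 + d - (L+1) = d by omega, pow_succ] at *
        linarith
      · subst h
        simp at *
        norm_num
        linarith
      · rw [if_neg (by omega)] at ih
        rw [if_pos h.le, if_neg (by omega)]
        rw [show L + 1 - i = (L - i) + 1 by omega, pow_succ]
        linarith
  refine this.trans ?_
  split_ifs
  · have : ((1:ℝ)/2) ^ (i - L) ≤ 1 := pow_le_one₀ (by norm_num) (by norm_num)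
    linarith
  · have : (0:ℝ) ≤ (1/2) ^ (L - i) := by positivity
    linarith

/-- greedy hitting -/
lemma hitting {Ω X : Type} [Fintype Ω] [Fintype X] (μ : Ω → ℝ) (hμ : ∀ w, 0 ≤ μ w)
    (hs : ∑ w, μ w = 1) (G : X → Ω → Prop) (δ : ℝ) (hδ : δ ≤ 1)
    (hG : ∀ x, ∃ s : Finset Ω, (∀ w ∈ s, G x w) ∧ δ ≤ ∑ w ∈ s, μ w) (M : ℕ) :
    ∃ (f : Fin M → Ω) (Y : Finset X), (∀ x ∉ Y, ∃ a, G x (f a)) ∧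
      (#Y : ℝ) ≤ (1 - δ) ^ M * Fintype.card X := by
  classical
  induction M with
  | zero => exact ⟨Fin.elim0, univ, by simp, by simp⟩
  | succ M ih =>
    obtain ⟨f, Y, hY, hc⟩ := ih
    choose s hs1 hs2 using hG
    have h1 : δ * #Y ≤ ∑ w, μ w * #(Y.filter fun x => w ∈ s x) := by
      calc δ * #Y = ∑ x ∈ Y, δ := by simp [mul_comm]
        _ ≤ ∑ x ∈ Y, ∑ w ∈ s x, μ w := sum_le_sum fun x _ => hs2 x
        _ = ∑ x ∈ Y, ∑ w, if w ∈ s x then μ w else 0 := by simp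
        _ = ∑ w, ∑ x ∈ Y, if w ∈ s x then μ w else 0 := sum_comm
        _ = _ := by
          refine sum_congr rfl fun w _ => ?_
          rw [← sum_filter]; simp [mul_comm]
    have h2 : ∃ w, δ * #Y ≤ #(Y.filter fun x => w ∈ s x) := by
      by_contra! hcon
      have hne : ∃ w, 0 < μ w := by
        by_contra! h
        have : ∑ w, μ w ≤ 0 := sum_nonpos fun w _ => h w
        linarith
      obtain ⟨w0, hw0⟩ := hne
      have : ∑ w, μ w * #(Y.filter fun x => w ∈ s x) < ∑ w, μ w * (δ * #Y) :=
        sum_lt_sum (fun w _ => mul_le_mul_of_nonneg_left (hcon w).le (hμ w))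
          ⟨w0, mem_univ _, mul_lt_mul_of_pos_left (hcon w0) hw0⟩
      rw [← sum_mul, hs] at this
      linarith
    obtain ⟨w, hw⟩ := h2
    refine ⟨Fin.cons w f, Y.filter fun x => w ∉ s x, ?_, ?_⟩
    · intro x hx
      simp only [mem_filter, not_and, not_not] at hx
      by_cases hxY : x ∈ Y
      · exact ⟨0, by simpa using hs1 x w (hx hxY)⟩
      · obtain ⟨a, ha⟩ := hY x hxY
        exact ⟨a.succ, by simpa using ha⟩
    · have h3 := card_filter_add_card_filter_not (s := Y) (fun x => w ∈ s x)
      have h4 : (#(Y.filter fun x => w ∈ s x) : ℝ) + #(Y.filter fun x => w ∉ s x) = #Y := by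
        exact_mod_cast h3
      rw [pow_succ]
      have := mul_le_mul_of_nonneg_left hc (sub_nonneg.2 hδ)
      nlinarith

lemma fail_bound (p : ℝ) (i j r : ℕ) (hp : p = (1/2) ^ (j+1)) (hij : j < i)
    (hr : 16 * 2 ^ (i - 1) < r) : Real.exp (-2 * gw i j) ≤ 1 - 2 * (1 - p/2) ^ r := by
  obtain ⟨d, rfl⟩ : ∃ d, i = j + 1 + d := ⟨i - (j+1), by omega⟩
  have hg : gw (j + 1 + d) j = 1 / (2 * 2 ^ d) := by
    unfold gw
    rw [if_neg (by omega), show j + 1 + d - j = d + 1 by omega, one_div_pow, pow_succ]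
    ring
  have hy : (1:ℝ) ≤ 2 ^ d := one_le_pow₀ (by norm_num)
  set y : ℝ := 2 ^ d with hyd
  have hpp : 0 < p := by rw [hp]; positivity
  have hp1 : p ≤ 1 := by rw [hp]; exact pow_le_one₀ (by norm_num) (by norm_num)
  have hpr : 8 * y ≤ p * r := by
    have h1 : (16 * 2 ^ (j + 1 + d - 1) : ℝ) ≤ r := by exact_mod_cast hr.le
    have h2 := mul_le_mul_of_nonneg_left h1 hpp.le
    refine le_trans (le_of_eq ?_) h2
    rw [hp, show j + 1 + d - 1 = j + d by omega, one_div_pow, pow_succ, pow_add, ← hyd]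
    field_simp
    norm_num
  have h3 : (1 - p/2) ^ r ≤ Real.exp (-(p * r / 2)) := by
    have := Real.one_sub_le_exp_neg (p/2)
    calc (1 - p/2) ^ r ≤ (Real.exp (-(p/2))) ^ r := pow_le_pow_left₀ (by linarith) this r
      _ = _ := by rw [← Real.exp_nat_mul]; ring_nf
  have h4 : Real.exp (-(p * r / 2)) ≤ 1 / (1 + 4 * y) := by
    rw [Real.exp_neg, ← one_div]
    apply one_div_le_one_div_of_le (by linarith)
    have := Real.add_one_le_exp (p * r / 2)
    linarith
  have h5 : 2 * (1 / (1 + 4 * y)) ≤ 1 / (2 * y) := by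
    rw [← mul_div_assoc, div_le_div_iff₀ (by linarith) (by linarith)]
    linarith
  rw [hg]
  set x := 1 / (2 * y) with hx
  have hx2 : x ≤ 1/2 := by
    rw [hx]; apply one_div_le_one_div_of_le <;> linarith
  have hx0 : 0 < x := by rw [hx]; positivity
  have h6 : Real.exp (-2 * x) ≤ 1 - x := by
    rw [neg_mul, Real.exp_neg]
    have := Real.add_one_le_exp (2 * x)
    apply inv_le_of_inv_le₀ (by linarith)
    refine le_trans ?_ this
    apply inv_le_of_inv_le₀ (by linarith)
    rw [inv_le_iff_one_le_mul₀ (by linarith)]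
    nlinarith
  linarith

lemma one_sub_pow_bound (p : ℝ) (w : ℕ) (h0 : 0 ≤ p) (h1 : p ≤ 1/2) :
    Real.exp (-2 * (p * w)) ≤ (1 - p) ^ w := by
  have h6 : Real.exp (-2 * p) ≤ 1 - p := by
    rw [neg_mul, Real.exp_neg]
    have := Real.add_one_le_exp (2 * p)
    apply inv_le_of_inv_le₀ (by linarith)
    refine le_trans ?_ this
    apply inv_le_of_inv_le₀ (by linarith)
    rw [inv_le_iff_one_le_mul₀ (by linarith)]
    nlinarith
  calc Real.exp (-2 * (p * w)) = (Real.exp (-2 * p)) ^ w := by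
        rw [← Real.exp_nat_mul]; ring_nf
    _ ≤ _ := pow_le_pow_left₀ (Real.exp_pos _).le h6 w

lemma core {V ι : Type} [Fintype V] [DecidableEq V] [Fintype ι] [DecidableEq ι]
    (U : ι → Finset V) (L : ℕ) (hL : 1 ≤ L) (hk : 48 * Fintype.card ι ≤ L ^ 2) (m0 : ι)
    (hU : U m0 = univ) (hN : 2 ^ L * L < Fintype.card V) :
    ∃ j < L, ∃ s : Finset (Finset V), (∀ S ∈ s, S.Nonempty ∧ ∀ m, #(S ∩ U m) ≠ 1) ∧
      Real.exp (-L) ≤ ∑ S ∈ s, wt ((1/2) ^ (j+1)) ∅ S := by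
  obtain ⟨i, hi⟩ := absorb U
  have hL0 : (0:ℝ) < L := by exact_mod_cast hL
  obtain ⟨j, hj, hcost⟩ : ∃ j < L, 16 * ∑ m, gw (i m) j ≤ L := by
    by_contra! hcon
    have h1 : ∑ j ∈ range L, (L:ℝ) < ∑ j ∈ range L, 16 * ∑ m, gw (i m) j :=
      sum_lt_sum_of_nonempty ⟨0, by simp; omega⟩ fun j hj => hcon j (mem_range.1 hj)
    rw [← mul_sum, sum_comm] at h1
    have h2 : ∑ m, ∑ j ∈ range L, gw (i m) j ≤ ∑ m : ι, (3:ℝ) := sum_le_sum fun m _ => gw_sum _ _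
    simp at h1 h2
    have h3 : (48 * Fintype.card ι : ℝ) ≤ L ^ 2 := by exact_mod_cast hk
    nlinarith
  obtain ⟨hW, hR⟩ := hi j
  set A := univ.filter fun m => i m ≤ j with hA
  set W := A.biUnion U with hWd
  set p : ℝ := (1/2) ^ (j+1) with hp
  have hpp : 0 < p := by rw [hp]; positivity
  have hp1 : p ≤ 1/2 := by
    rw [hp, pow_succ]
    have : ((1:ℝ)/2) ^ j ≤ 1 := pow_le_one₀ (by norm_num) (by norm_num)
    linarith
  have hpW : p * #W ≤ 8 * ∑ m ∈ A, gw (i m) j := by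
    have h1 : (#W : ℝ) ≤ ∑ m ∈ A, 16 * 2 ^ i m := by exact_mod_cast hW
    refine (mul_le_mul_of_nonneg_left h1 hpp.le).trans (le_of_eq ?_)
    rw [mul_sum, mul_sum]
    refine sum_congr rfl fun m hm => ?_
    have hm' : i m ≤ j := by simpa [hA] using hm
    unfold gw
    rw [if_pos hm', hp]
    obtain ⟨d, hd⟩ : ∃ d, j = i m + d := ⟨j - i m, by omega⟩
    rw [show j - i m = d by omega, hd, pow_succ, pow_add, one_div_pow, one_div_pow]
    field_simp
    norm_num
  have hsplit : ∑ m ∈ A, gw (i m) j + ∑ m ∈ Aᶜ, gw (i m) j = ∑ m, gw (i m) j :=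
    sum_add_sum_compl _ _
  have hc0 : 0 ≤ ∑ m ∈ Aᶜ, gw (i m) j := sum_nonneg fun m _ => gw_nonneg _ _
  have hm0 : m0 ∈ Aᶜ := by
    rw [mem_compl]
    intro h
    have h1 : W = univ := by
      apply eq_univ_of_forall
      intro v
      exact mem_biUnion.2 ⟨m0, h, by simp [hU]⟩
    have h2 : p * #W ≤ L := by linarith
    rw [h1, card_univ, hp, one_div_pow, one_div_mul_eq_div, div_le_iff₀ (by positivity)] at h2
    have h3 : Fintype.card V ≤ L * 2 ^ (j+1) := by exact_mod_cast h2
    have h4 : 2 ^ (j+1) ≤ 2 ^ L := Nat.pow_le_pow_right (by norm_num) hj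
    nlinarith
  have main := wt_many hpp.le (by linarith : p < 1) W U Aᶜ (fun m => Real.exp (-2 * gw (i m) j))
    (fun m hm => by
      have hm' : j < i m := by simpa [hA] using hm
      exact fail_bound p _ _ _ hp hm' (hR m hm'))
    (fun m _ => (Real.exp_pos _).le)
  refine ⟨j, hj, univ.filter fun S => S.Nonempty ∧ ∀ m, #(S ∩ U m) ≠ 1, by simp, ?_⟩
  have hlow : Real.exp (-L) ≤ (1 - p) ^ #W * ∏ m ∈ Aᶜ, Real.exp (-2 * gw (i m) j) := by
    rw [← Real.exp_sum, ← mul_sum]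
    refine le_trans ?_ (mul_le_mul_of_nonneg_right (one_sub_pow_bound p #W hpp.le hp1) (Real.exp_pos _).le)
    rw [← Real.exp_add]
    apply Real.exp_le_exp.2
    linarith
  refine (hlow.trans main).trans ?_
  rw [sum_filter]
  refine sum_le_sum fun S _ => ?_
  split_ifs with h
  · refine le_trans (mul_le_of_le_one_right (wt_nonneg hpp.le (by linarith) W S) ?_)
      (wt_le hpp.le (by linarith) W S)
    exact prod_le_one (fun m _ => ind2_nonneg _ _) fun m _ => by unfold ind2; split_ifs <;> norm_num
  · apply le_of_eq
    by_contra hne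
    apply h
    have hne1 := left_ne_zero_of_mul hne
    have hne2 := right_ne_zero_of_mul hne
    have hdis : Disjoint S W := by
      by_contra hd
      exact hne1 (wt_eq_zero W S hd)
    have h2 : ∀ m ∈ Aᶜ, 2 ≤ #(S ∩ U m) := by
      intro m hm
      by_contra hlt
      exact (prod_ne_zero_iff.1 hne2 m hm) (by unfold ind2; rw [if_neg hlt])
    constructor
    · have := h2 m0 hm0
      rw [hU, inter_univ] at this
      exact card_pos.1 (by omega)
    · intro m
      by_cases hm : m ∈ A
      · have : Disjoint S (U m) := hdis.mono_right (subset_biUnion_of_mem U hm)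
        rw [disjoint_iff_inter_eq_empty.1 this]
        simp
      · have := h2 m (by simpa using hm)
        omega

lemma family (L K N M : ℕ) (hL : 1 ≤ L) (hK : 1 ≤ K) (hKL : 48 * (K + 1) ≤ L ^ 2) (hN : N = 4 ^ L)
    (hM : M = N * K * L * 4 ^ L) :
    ∃ f : Fin M → Finset (Fin N), ∀ x : Fin K → Finset (Fin N),
      ∃ a, (f a).Nonempty ∧ ∀ m, #(f a ∩ x m) ≠ 1 := by
  have hL0 : (0:ℝ) < L := by exact_mod_cast hL
  have hp : ∀ j : ℕ, (0:ℝ) ≤ (1/2) ^ (j+1) ∧ ((1:ℝ)/2) ^ (j+1) ≤ 1 := fun j =>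
    ⟨by positivity, pow_le_one₀ (by norm_num) (by norm_num)⟩
  have hN' : 2 ^ L * L < N := by
    rw [hN, show 4 = 2 * 2 by norm_num, mul_pow]
    exact Nat.mul_lt_mul_of_pos_left Nat.lt_two_pow_self (by positivity)
  let μ : Finset (Fin N) → ℝ := fun S => (1 / L) * ∑ j ∈ range L, wt ((1/2) ^ (j+1)) ∅ S
  have hμ0 : ∀ S, 0 ≤ μ S := fun S => mul_nonneg (by positivity)
    (sum_nonneg fun j _ => wt_nonneg (hp j).1 (hp j).2 _ _)
  have hμ1 : ∑ S, μ S = 1 := by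
    simp only [μ]
    rw [← mul_sum, sum_comm]
    simp [wt_sum]
    field_simp
  set δ : ℝ := Real.exp (-L) / L with hδ
  have hδ1 : δ ≤ 1 := by
    rw [hδ, div_le_one hL0]
    have h1 : Real.exp (-(L:ℝ)) ≤ 1 := Real.exp_le_one_iff.2 (by linarith)
    have h2 : (1:ℝ) ≤ L := by exact_mod_cast hL
    linarith
  obtain ⟨f, Y, hY, hc⟩ := hitting μ hμ0 hμ1
    (fun (x : Fin K → Finset (Fin N)) S => S.Nonempty ∧ ∀ m, #(S ∩ x m) ≠ 1) δ hδ1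
    (fun x => by
      obtain ⟨j, hj, s, hs1, hs2⟩ := core (fun o : Option (Fin K) => o.elim univ x) L hL
        (by simpa using hKL) none rfl (by simpa using hN')
      refine ⟨s, fun S hS => ⟨(hs1 S hS).1, fun m => (hs1 S hS).2 (some m)⟩, ?_⟩
      simp only [μ]
      rw [← mul_sum, sum_comm, hδ, div_eq_mul_one_div, mul_comm]
      refine mul_le_mul_of_nonneg_left (hs2.trans ?_) (by positivity)
      exact single_le_sum (f := fun j => ∑ S ∈ s, wt ((1/2) ^ (j+1)) ∅ S)
        (fun j _ => sum_nonneg fun S _ => wt_nonneg (hp j).1 (hp j).2 _ _) (mem_range.2 hj)) M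
  refine ⟨f, fun x => hY x ?_⟩
  have hlt : (1 - δ) ^ M * (Fintype.card (Fin K → Finset (Fin N)) : ℝ) < 1 := by
    have hcard : (Fintype.card (Fin K → Finset (Fin N)) : ℝ) = 2 ^ (N * K) := by
      simp [pow_mul]
    rw [hcard]
    have hNK : N * K ≠ 0 := by
      have : 0 < N := by omega
      positivity
    have hδM : ((N * K : ℕ) : ℝ) ≤ δ * M := by
      have h1 : (1:ℝ) ≤ Real.exp (-L) * 4 ^ L := by
        rw [Real.exp_neg, inv_mul_eq_div, one_le_div (Real.exp_pos _)]
        calc Real.exp L = (Real.exp 1) ^ L := by rw [← Real.exp_nat_mul, mul_one]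
          _ ≤ 4 ^ L := pow_le_pow_left₀ (Real.exp_pos _).le (by linarith [Real.exp_one_lt_d9]) L
      have h2 : δ * M = ((N * K : ℕ) : ℝ) * (Real.exp (-L) * 4 ^ L) := by
        rw [hδ, hM]; push_cast; field_simp
      rw [h2]
      exact le_mul_of_one_le_right (by positivity) h1
    have h3 : (1 - δ) ^ M ≤ Real.exp (-((N * K : ℕ) : ℝ)) := by
      calc (1 - δ) ^ M ≤ (Real.exp (-δ)) ^ M :=
            pow_le_pow_left₀ (by linarith) (Real.one_sub_le_exp_neg δ) M
        _ = Real.exp (-(δ * M)) := by rw [← Real.exp_nat_mul]; ring_nf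
        _ ≤ _ := Real.exp_le_exp.2 (by linarith)
    have h4 : (2:ℝ) ^ (N * K) < Real.exp ((N * K : ℕ) : ℝ) := by
      calc (2:ℝ) ^ (N * K) < (Real.exp 1) ^ (N * K) :=
            pow_lt_pow_left₀ (by linarith [Real.exp_one_gt_d9]) (by norm_num) hNK
        _ = _ := by rw [← Real.exp_nat_mul, mul_one]
    calc (1 - δ) ^ M * 2 ^ (N * K) ≤ Real.exp (-((N * K : ℕ) : ℝ)) * 2 ^ (N * K) :=
          mul_le_mul_of_nonneg_right h3 (by positivity)
      _ < Real.exp (-((N * K : ℕ) : ℝ)) * Real.exp ((N * K : ℕ) : ℝ) :=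
          mul_lt_mul_of_pos_left h4 (Real.exp_pos _)
      _ = 1 := by rw [← Real.exp_add]; simp
  have : (#Y : ℝ) < 1 := hc.trans_lt hlt
  have : #Y < 1 := by exact_mod_cast this
  rw [card_eq_zero.1 (by omega : #Y = 0)]
  simp

/-- Tightness part of Corollary 1.4: there are hypergraphs of arbitrarily large
combinatorial size `n` for which every HBD requires at least `c · (log₂ n)²` colors. -/
theorem hbd_lower_bound :
    ∃ c : ℝ, 0 < c ∧ ∀ n₀ : ℕ, ∃ n : ℕ, n₀ ≤ n ∧
      ∃ (Vset I : Finset ℕ) (e : ℕ → Finset ℕ),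
        (∀ i ∈ I, e i ⊆ Vset) ∧ (∀ i ∈ I, (e i).Nonempty) ∧
        Vset.card + I.card = n ∧
        ∀ k : ℕ, HasHBD Vset I e k → c * (Real.logb 2 n) ^ 2 ≤ (k : ℝ) := by
  refine ⟨1 / 10000, by norm_num, fun n₀ => ?_⟩
  obtain ⟨l, hl⟩ : ∃ l, l = n₀ + 1 := ⟨_, rfl⟩
  obtain ⟨L, hL⟩ : ∃ L, L = 10 * l := ⟨_, rfl⟩
  obtain ⟨K, hK⟩ : ∃ K, K = l ^ 2 := ⟨_, rfl⟩
  obtain ⟨N, hN⟩ : ∃ N, N = 4 ^ L := ⟨_, rfl⟩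
  obtain ⟨M, hM⟩ : ∃ M, M = N * K * L * 4 ^ L := ⟨_, rfl⟩
  have hl1 : 1 ≤ l := by omega
  have hK1 : 1 ≤ K := by rw [hK]; exact Nat.one_le_pow _ _ hl1
  obtain ⟨f, hf⟩ := family L K N M (by omega) hK1 (by rw [hL, mul_pow, ← hK]; omega) hN hM
  have hLN : L < N := by rw [hN]; exact Nat.lt_pow_self (by norm_num)
  have hNpos : 0 < N := by omega
  have hnle : N + M ≤ 2 ^ (80 * l) := by
    have h2 : L < 2 ^ L := Nat.lt_two_pow_self
    have hKL : K ≤ L ^ 2 := by rw [hK, hL]; exact Nat.pow_le_pow_left (by omega) 2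
    have h3 : K * L ≤ (2 ^ L) ^ 3 := by
      calc K * L ≤ L ^ 2 * L := Nat.mul_le_mul_right _ hKL
        _ = L ^ 3 := by ring
        _ ≤ _ := Nat.pow_le_pow_left h2.le 3
    have h4 : N = (2 ^ L) ^ 2 := by rw [hN, ← pow_mul, mul_comm, pow_mul]; norm_num
    have h5 : M = (2 ^ L) ^ 4 * (K * L) := by rw [hM, ← hN, h4]; ring
    have h6 : 2 ^ (80 * l) = (2 ^ L) ^ 8 := by rw [← pow_mul, hL]; congr 1; ring
    rw [h6, h5, h4]
    have h7 : 2 ≤ 2 ^ L := by omega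
    generalize 2 ^ L = z at *
    calc z ^ 2 + z ^ 4 * (K * L) ≤ z ^ 7 + z ^ 4 * z ^ 3 :=
          add_le_add (Nat.pow_le_pow_right (by omega) (by norm_num)) (Nat.mul_le_mul_left _ h3)
      _ = z ^ 7 * 2 := by ring
      _ ≤ z ^ 7 * z := Nat.mul_le_mul_left _ h7
      _ = z ^ 8 := by ring
  let f' : Fin M → Finset (Fin N) := fun a => if (f a).Nonempty then f a else univ
  have hf'ne : ∀ a, (f' a).Nonempty := by
    intro a
    simp only [f']
    split_ifs with h
    · exact h
    · exact ⟨⟨0, hNpos⟩, mem_univ _⟩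
  let e : ℕ → Finset ℕ := fun i => if h : i < M then (f' ⟨i, h⟩).map Fin.valEmbedding else ∅
  have he : ∀ i (h : i < M), e i = (f' ⟨i, h⟩).map Fin.valEmbedding := fun i h => by simp [e, h]
  refine ⟨N + M, by omega, range N, range M, e, ?_, ?_, by simp, ?_⟩
  · intro i hi
    rw [he i (mem_range.1 hi)]
    intro v hv
    obtain ⟨w, _, rfl⟩ := mem_map.1 hv
    simp
  · intro i hi
    rw [he i (mem_range.1 hi)]
    simpa using hf'ne _
  · rintro k ⟨color, hcol⟩
    choose U hU1 hU2 using hcol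
    have hkK : K < k := by
      by_contra hle
      push Not at hle
      obtain ⟨a, ha1, ha2⟩ := hf fun m => if h : m.1 < k then univ.filter fun v => v.1 ∈ U ⟨m, h⟩ else ∅
      have h1 := hU2 (color a.1) a.1 (mem_range.2 a.2) rfl
      apply ha2 ⟨(color a.1).1, (color a.1).2.trans_le hle⟩
      rw [← h1, he a.1 a.2, ← card_map Fin.valEmbedding]
      congr 1
      ext v
      simp only [(color a.1).2, dif_pos, mem_map, mem_inter, mem_filter, mem_univ, true_and, f', ha1, if_true,
        Fin.eta, Fin.valEmbedding_apply]
      constructor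
      · rintro ⟨w, ⟨h1, h2⟩, rfl⟩
        exact ⟨h2, w, h1, rfl⟩
      · rintro ⟨h2, w, h1, rfl⟩
        exact ⟨w, ⟨h1, h2⟩, rfl⟩
    have hkR : (l:ℝ) ^ 2 ≤ k := by
      have : l ^ 2 ≤ k := by omega
      exact_mod_cast this
    have hlog : Real.logb 2 ((N + M : ℕ) : ℝ) ≤ 80 * l := by
      rw [Real.logb_le_iff_le_rpow (by norm_num) (by exact_mod_cast (by omega : 0 < N + M))]
      have : ((N + M : ℕ) : ℝ) ≤ 2 ^ (80 * l) := by exact_mod_cast hnle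
      refine this.trans (le_of_eq ?_)
      rw [← Real.rpow_natCast]
      push_cast
      rfl
    have hlog0 : 0 ≤ Real.logb 2 ((N + M : ℕ) : ℝ) :=
      Real.logb_nonneg (by norm_num) (by exact_mod_cast (by omega : 1 ≤ N + M))
    have := pow_le_pow_left₀ hlog0 hlog 2
    nlinarith [sq_nonneg (l:ℝ)]
end

section
/- (Single-iteration success probability, core inequality from the proof of Lemma 4.1.) For every integer r ≥ 1, setting p = 2^{-⌊log₂ r⌋} (a real number in (0,1]), one has r · p · (1 - p)^{r-1} ≥ 1/9. Equivalently, if X_1, …, X_r are independent Bernoulli random variables each with success probability p = 2^{-⌊log₂ r⌋}, then the probability that exactly one of X_1, …, X_r equals 1 is r · p · (1 - p)^{r-1} ≥ 1/9. -/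
lemma aux_third (m : ℕ) : (1 : ℝ) / 3 ≤ (1 - ((m : ℝ) + 1)⁻¹) ^ m := by
  rcases Nat.eq_zero_or_pos m with rfl | hm
  · norm_num
  have hm' : (0 : ℝ) < m := by exact_mod_cast hm
  have h1 : (1 : ℝ) - ((m : ℝ) + 1)⁻¹ = (1 + (m : ℝ)⁻¹)⁻¹ := by
    field_simp
    ring
  rw [h1, inv_pow, one_div]
  apply inv_anti₀ (by positivity)
  calc (1 + (m : ℝ)⁻¹) ^ m ≤ (Real.exp (m : ℝ)⁻¹) ^ m := by
        gcongr
        linarith [Real.add_one_le_exp (m : ℝ)⁻¹]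
    _ = Real.exp 1 := by
        rw [← Real.exp_nat_mul, mul_inv_cancel₀ hm'.ne']
    _ ≤ 3 := by linarith [Real.exp_one_lt_d9]

/-- Single-iteration success probability (core inequality from the proof of Lemma 4.1):
for `p = 2^{-⌊log₂ r⌋}`, the probability `r · p · (1-p)^{r-1}` that exactly one of `r`
independent Bernoulli(`p`) variables equals `1` is at least `1/9`. -/
theorem single_iteration_success (r : ℕ) (hr : 1 ≤ r) :
    (1 : ℝ) / 9 ≤
      (r : ℝ) * ((2 : ℝ)⁻¹ ^ Nat.log 2 r) *
        (1 - (2 : ℝ)⁻¹ ^ Nat.log 2 r) ^ (r - 1) := by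
  have hlo : 2 ^ Nat.log 2 r ≤ r := Nat.pow_log_le_self 2 (by omega)
  have hhi : r < 2 ^ (Nat.log 2 r + 1) := Nat.lt_pow_succ_log_self (by norm_num) r
  obtain ⟨m, hm⟩ : ∃ m, 2 ^ Nat.log 2 r = m + 1 :=
    Nat.exists_eq_succ_of_ne_zero (by positivity)
  have hp : (2 : ℝ)⁻¹ ^ Nat.log 2 r = ((m : ℝ) + 1)⁻¹ := by
    rw [inv_pow]
    congr 1
    exact_mod_cast hm
  rw [pow_succ, hm] at hhi
  rw [hm] at hlo
  rw [hp]
  have hpos : (0 : ℝ) < (m : ℝ) + 1 := by positivity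
  have hle : ((m : ℝ) + 1)⁻¹ ≤ 1 := inv_le_one_of_one_le₀ (by linarith [(Nat.cast_nonneg m : (0:ℝ) ≤ m)])
  have hge : (0 : ℝ) ≤ ((m : ℝ) + 1)⁻¹ := by positivity
  have h1 : (1 : ℝ) ≤ r * ((m : ℝ) + 1)⁻¹ := by
    rw [← div_eq_mul_inv, one_le_div hpos]
    exact_mod_cast hlo
  have h2 : (1 - ((m : ℝ) + 1)⁻¹) ^ (m * 2) ≤ (1 - ((m : ℝ) + 1)⁻¹) ^ (r - 1) :=
    pow_le_pow_of_le_one (by linarith) (by linarith) (by omega)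
  rw [pow_mul] at h2
  have h3 := aux_third m
  have h4 : (1 : ℝ) / 9 ≤ (1 - ((m : ℝ) + 1)⁻¹) ^ (r - 1) := by nlinarith
  nlinarith
end
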